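/- arXiv:2507.11126 — 3 statements merged into one kernel-verified Lean document; each statement's English description precedes it below -/
import Mathlib

section
/- Let T be a minimal trap set of an automaton A and let ρ be a run of A with ρ_i ∈ T for some index i. If S is a set of states such that S ∩ T ≠ ∅ and T \ S is a transient of A, then ρ models Inf(S), i.e., ρ visits S infinitely often. -/
/-- One-step transition relation: `q → q'` iff `(q, a, q') ∈ δ` for some letter `a`. -/
def Step {Q A : Type*} (δ : Set (Q × A × Q)) (q q' : Q) : Prop :=
  ∃ a, (q, a, q') ∈ δ

/-- A run of the automaton: an infinite sequence of states starting in an initial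
state and following the transition relation. -/
def IsRun {Q A : Type*} (δ : Set (Q × A × Q)) (Q₀ : Set Q) (ρ : ℕ → Q) : Prop :=
  ρ 0 ∈ Q₀ ∧ ∀ i, Step δ (ρ i) (ρ (i + 1))

/-- A trap set: a nonempty set of states closed under the transition relation. -/
def IsTrap {Q A : Type*} (δ : Set (Q × A × Q)) (T : Set Q) : Prop :=
  T.Nonempty ∧ ∀ q ∈ T, ∀ q', Step δ q q' → q' ∈ T

/-- Reachability: reflexive-transitive closure of the transition relation. -/
def Reach {Q A : Type*} (δ : Set (Q × A × Q)) : Q → Q → Prop :=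
  Relation.ReflTransGen (Step δ)

/-- A strongly connected component: a maximal set of pairwise-reachable states. -/
def IsSCC {Q A : Type*} (δ : Set (Q × A × Q)) (K : Set Q) : Prop :=
  (∀ p ∈ K, ∀ q ∈ K, Reach δ p q) ∧
  ∀ K', K ⊆ K' → (∀ p ∈ K', ∀ q ∈ K', Reach δ p q) → K' = K

/-- A bottom SCC: an SCC closed under the transition relation. -/
def IsBSCC {Q A : Type*} (δ : Set (Q × A × Q)) (K : Set Q) : Prop :=
  IsSCC δ K ∧ ∀ q ∈ K, ∀ q', Step δ q q' → q' ∈ K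

/-- A minimal trap set: a trap set with no proper subset that is a trap set. -/
def IsMinTrap {Q A : Type*} (δ : Set (Q × A × Q)) (T : Set Q) : Prop :=
  IsTrap δ T ∧ ∀ T', T' ⊂ T → ¬ IsTrap δ T'

/-- A transient: a set of states that every run of the automaton leaves
infinitely often (i.e., every run visits its complement infinitely often). -/
def IsTransient {Q A : Type*} (δ : Set (Q × A × Q)) (Q₀ : Set Q) (C : Set Q) : Prop :=
  ∀ ρ, IsRun δ Q₀ ρ → {i | ρ i ∉ C}.Infinite

/-- If a run enters a minimal trap set `T`, and `S` intersects `T`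
with `T \ S` a transient, then the run models `Inf(S)`. -/
theorem run_in_min_trap_models_inf {Q A : Type*} [Fintype Q] [Fintype A]
    (δ : Set (Q × A × Q)) (Q₀ : Set Q) (hQ₀ : Q₀.Nonempty)
    (T : Set Q) (hT : IsMinTrap δ T)
    (ρ : ℕ → Q) (hρ : IsRun δ Q₀ ρ)
    (i : ℕ) (hi : ρ i ∈ T)
    (S : Set Q) (hST : (S ∩ T).Nonempty) (htr : IsTransient δ Q₀ (T \ S)) :
    {j | ρ j ∈ S}.Infinite := by
  have hmem : ∀ j, i ≤ j → ρ j ∈ T := by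
    intro j hj
    induction j, hj using Nat.le_induction with
    | base => exact hi
    | succ n _ ih => exact hT.1.2 _ ih _ (hρ.2 n)
  intro hfin
  refine htr ρ hρ ((hfin.union (Set.finite_lt_nat i)).subset ?_)
  intro j hj
  by_cases h : j < i
  · exact Or.inr h
  · left
    by_contra hS
    exact hj ⟨hmem j (not_lt.mp h), hS⟩
end

section
/- Let A be a deterministic complete automaton, and let T, S be sets of states of A such that T is a minimal trap set, S ∩ T ≠ ∅, and T \ S is nonempty and not a transient of A. Then for every run ρ of A and every index i with ρ_i ∈ T, the finite word read along ρ up to position i is an ugly prefix for the acceptance condition Fin(S). -/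
/-- A run of the automaton on the infinite word `w`. -/
def IsRunOn {Q A : Type*} (δ : Set (Q × A × Q)) (Q₀ : Set Q)
    (w : ℕ → A) (ρ : ℕ → Q) : Prop :=
  ρ 0 ∈ Q₀ ∧ ∀ i, (ρ i, w i, ρ (i + 1)) ∈ δ

/-- Concatenation of a finite word `u` with an infinite word `w`. -/
def wcat {A : Type*} (u : List A) (w : ℕ → A) : ℕ → A :=
  fun n => if h : n < u.length then u.get ⟨n, h⟩ else w (n - u.length)

/-- `u` is a good prefix for the acceptance condition `φ` (w.r.t. the function
`run` assigning to each infinite word its unique run): every infinite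
continuation of `u` yields a word whose run models `φ`. -/
def GoodPrefix {Q A : Type*} (run : (ℕ → A) → ℕ → Q)
    (φ : (ℕ → Q) → Prop) (u : List A) : Prop :=
  ∀ w : ℕ → A, φ (run (wcat u w))

/-- `u` is a bad prefix for `φ`: no infinite continuation of `u` yields a word
whose run models `φ`. -/
def BadPrefix {Q A : Type*} (run : (ℕ → A) → ℕ → Q)
    (φ : (ℕ → Q) → Prop) (u : List A) : Prop :=
  ∀ w : ℕ → A, ¬ φ (run (wcat u w))

/-- `u` is an ugly prefix for `φ`: no finite extension of `u` is good or bad. -/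
def UglyPrefix {Q A : Type*} (run : (ℕ → A) → ℕ → Q)
    (φ : (ℕ → Q) → Prop) (u : List A) : Prop :=
  ∀ v : List A, ¬ GoodPrefix run φ (u ++ v) ∧ ¬ BadPrefix run φ (u ++ v)

theorem runs_agree {Q A : Type*} {δ : Set (Q × A × Q)} {Q₀ : Set Q}
    (hdet₀ : ∃ q₀, Q₀ = {q₀})
    (hdet : ∀ q a q₁ q₂, (q, a, q₁) ∈ δ → (q, a, q₂) ∈ δ → q₁ = q₂)
    {w w' : ℕ → A} {r r' : ℕ → Q} (h : IsRunOn δ Q₀ w r) (h' : IsRunOn δ Q₀ w' r')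
    (n : ℕ) (hw : ∀ k < n, w k = w' k) : r n = r' n := by
  induction n with
  | zero =>
    obtain ⟨q, rfl⟩ := hdet₀
    have h1 := h.1
    have h2 := h'.1
    simp only [Set.mem_singleton_iff] at h1 h2
    rw [h1, h2]
  | succ n ih =>
    have e := ih (fun k hk => hw k (by omega))
    have a := h.2 n
    have b := h'.2 n
    rw [e, hw n (by omega)] at a
    exact hdet _ _ _ _ a b

theorem wcat_add {A : Type*} (u : List A) (w : ℕ → A) (n : ℕ) :
    wcat u w (u.length + n) = w n := by
  simp [wcat]

theorem wcat_lt {A : Type*} (u : List A) (w w' : ℕ → A) (n : ℕ) (h : n < u.length) :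
    wcat u w n = wcat u w' n := by
  simp [wcat, h]

theorem minTrap_reach {Q A : Type*} {δ : Set (Q × A × Q)} {T : Set Q}
    (hT : IsMinTrap δ T) {p q : Q} (hp : p ∈ T) (hq : q ∈ T) : Reach δ p q := by
  by_contra hn
  have hsub : ∀ x, Reach δ p x → x ∈ T := by
    intro x hx
    induction hx with
    | refl => exact hp
    | tail _ h ih => exact hT.1.2 _ ih _ h
  refine hT.2 {x | Reach δ p x} ⟨fun x hx => hsub x hx, fun h => hn (h hq)⟩ ⟨⟨p, .refl⟩, ?_⟩
  intro x hx y hy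
  exact Relation.ReflTransGen.tail hx hy

/-- `p` can reach `S` in exactly `n` steps. -/
def ReachIn {Q A : Type*} (δ : Set (Q × A × Q)) (S : Set Q) : ℕ → Q → Prop
  | 0, p => p ∈ S
  | n + 1, p => ∃ q, Step δ p q ∧ ReachIn δ S n q

theorem exists_inf_path {Q A : Type*} {δ : Set (Q × A × Q)} {T S : Set Q}
    (hT : IsMinTrap δ T) (hST : (S ∩ T).Nonempty) (hsucc : ∀ q, ∃ q', Step δ q q')
    {p : Q} (hp : p ∈ T) :
    ∃ σ : ℕ → Q, σ 0 = p ∧ (∀ n, Step δ (σ n) (σ (n + 1))) ∧ ¬ {n | σ n ∈ S}.Finite := by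
  obtain ⟨s, hsS, hsT⟩ := hST
  have hex : ∀ q ∈ T, ∃ n, ReachIn δ S n q := by
    intro q hq
    have := minTrap_reach hT hq hsT
    clear hq
    induction this using Relation.ReflTransGen.head_induction_on with
    | refl => exact ⟨0, hsS⟩
    | head h _ ih =>
      obtain ⟨n, hn⟩ := ih
      exact ⟨n + 1, _, h, hn⟩
  let d : Q → ℕ := fun q => sInf {n | ReachIn δ S n q}
  have hg : ∀ q, ∃ q', Step δ q q' ∧ (q ∈ T → q ∉ S → d q' < d q) := by
    intro q
    by_cases hq : q ∈ T ∧ q ∉ S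
    · have hd : ReachIn δ S (d q) q := Nat.sInf_mem (hex q hq.1)
      rcases hdq : d q with _ | m
      · rw [hdq] at hd
        exact absurd hd hq.2
      · rw [hdq] at hd
        obtain ⟨q', h1, h2⟩ := hd
        have h3 : d q' ≤ m := Nat.sInf_le h2
        exact ⟨q', h1, fun _ _ => by omega⟩
    · obtain ⟨q', h⟩ := hsucc q
      exact ⟨q', h, fun a b => absurd ⟨a, b⟩ hq⟩
  choose g hg1 hg2 using hg
  have hstep : ∀ n, Step δ (g^[n] p) (g^[n + 1] p) := by
    intro n
    rw [Function.iterate_succ_apply']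
    exact hg1 _
  have hTn : ∀ n, g^[n] p ∈ T := by
    intro n
    induction n with
    | zero => exact hp
    | succ n ih => exact hT.1.2 _ ih _ (hstep n)
  refine ⟨fun n => g^[n] p, rfl, hstep, ?_⟩
  have key : ∀ m n, d (g^[n] p) ≤ m → ∃ k ≥ n, g^[k] p ∈ S := by
    intro m
    induction m with
    | zero =>
      intro n hn
      by_cases h : g^[n] p ∈ S
      · exact ⟨n, le_rfl, h⟩
      · have := hg2 _ (hTn n) h
        omega
    | succ m ih =>
      intro n hn
      by_cases h : g^[n] p ∈ S
      · exact ⟨n, le_rfl, h⟩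
      · have h2 := hg2 _ (hTn n) h
        rw [← Function.iterate_succ_apply' g n p] at h2
        change d (g^[n + 1] p) < _ at h2
        obtain ⟨k, hk, hkS⟩ := ih (n + 1) (by omega)
        exact ⟨k, by omega, hkS⟩
  intro hfin
  obtain ⟨b, hb⟩ := hfin.bddAbove
  obtain ⟨k, hk, hkS⟩ := key _ (b + 1) le_rfl
  have := hb hkS
  omega

theorem exists_fin_path {Q A : Type*} {δ : Set (Q × A × Q)} {S : Set Q}
    {p q : Q} (h : Reach δ p q) (σ : ℕ → Q) (h0 : σ 0 = q)
    (hs : ∀ n, Step δ (σ n) (σ (n + 1))) (hf : {n | σ n ∈ S}.Finite) :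
    ∃ σ : ℕ → Q, σ 0 = p ∧ (∀ n, Step δ (σ n) (σ (n + 1))) ∧ {n | σ n ∈ S}.Finite := by
  induction h using Relation.ReflTransGen.head_induction_on with
  | refl => exact ⟨σ, h0, hs, hf⟩
  | @head a c h _ ih =>
    obtain ⟨τ, t0, ts, tf⟩ := ih
    refine ⟨fun n => Nat.casesOn n a τ, rfl, ?_, ?_⟩
    · rintro (_ | n)
      · simpa [t0] using h
      · exact ts n
    · refine ((tf.image Nat.succ).insert 0).subset ?_
      rintro (_ | n) hn
      · simp
      · right
        exact ⟨n, hn, rfl⟩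

/-- In a deterministic complete automaton, if `T` is a minimal
trap set, `S ∩ T ≠ ∅`, and `T \ S` is nonempty and not a transient, then for
every run `ρ` (on word `w`) and index `i` with `ρ i ∈ T`, the finite word
`w₀ ⋯ w_{i-1}` read along `ρ` up to position `i` is an ugly prefix for the
acceptance condition `Fin(S)`. -/
theorem ugly_prefix_for_fin {Q A : Type*} [Fintype Q] [Fintype A]
    (δ : Set (Q × A × Q)) (Q₀ : Set Q)
    (hdet₀ : ∃ q₀, Q₀ = {q₀})
    (hdet : ∀ q a q₁ q₂, (q, a, q₁) ∈ δ → (q, a, q₂) ∈ δ → q₁ = q₂)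
    (hcomp : ∀ q a, ∃ q', (q, a, q') ∈ δ)
    (run : (ℕ → A) → ℕ → Q)
    (hrun : ∀ w, IsRunOn δ Q₀ w (run w))
    (T S : Set Q)
    (hT : IsMinTrap δ T)
    (hST : (S ∩ T).Nonempty)
    (hTSne : (T \ S).Nonempty)
    (hTStr : ¬ IsTransient δ Q₀ (T \ S))
    (ρ : ℕ → Q) (w : ℕ → A) (hρ : IsRunOn δ Q₀ w ρ)
    (i : ℕ) (hi : ρ i ∈ T) :
    UglyPrefix run (fun r => {n | r n ∈ S}.Finite) (List.ofFn fun k : Fin i => w k) := by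
  obtain ⟨r, hr, hrN⟩ : ∃ r, IsRun δ Q₀ r ∧ {i | r i ∉ T \ S}.Finite := by
    unfold IsTransient at hTStr
    push Not at hTStr
    simpa [Set.not_infinite] using hTStr
  obtain ⟨a0, -⟩ := hr.2 0
  have hsucc : ∀ q, ∃ q', Step δ q q' := fun q =>
    let ⟨q', h⟩ := hcomp q a0
    ⟨q', a0, h⟩
  intro v
  set u := List.ofFn fun k : Fin i => w k with hu
  have hul : u.length = i := by simp [hu]
  set x := u ++ v with hx
  have hxl : i ≤ x.length := by simp [hx, hul]
  have hxw : ∀ w' k, k < i → wcat x w' k = w k := by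
    intro w' k hk
    have : k < x.length := by omega
    unfold wcat
    rw [dif_pos this]
    simp only [hx, List.get_eq_getElem]
    rw [List.getElem_append_left (by omega)]
    simp [hu]
  let p := run (wcat x fun _ => a0) x.length
  have hpw : ∀ w', run (wcat x w') x.length = p := fun w' =>
    runs_agree hdet₀ hdet (hrun _) (hrun _) _ (fun k hk => wcat_lt x _ _ k hk)
  have hpT : p ∈ T := by
    have : ∀ n, run (wcat x fun _ => a0) (i + n) ∈ T := by
      intro n
      induction n with
      | zero =>
        have := runs_agree hdet₀ hdet (hrun (wcat x fun _ => a0)) hρ i (fun k hk => hxw _ k hk)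
        rw [Nat.add_zero, this]
        exact hi
      | succ n ih => exact hT.1.2 _ ih _ ⟨_, (hrun _).2 (i + n)⟩
    have h := this (x.length - i)
    rwa [Nat.add_sub_cancel' hxl] at h
  have real : ∀ σ : ℕ → Q, σ 0 = p → (∀ n, Step δ (σ n) (σ (n + 1))) →
      ∃ w', ∀ n, run (wcat x w') (x.length + n) = σ n := by
    intro σ h0 hs
    choose w' hw' using hs
    refine ⟨w', fun n => ?_⟩
    induction n with
    | zero => rw [Nat.add_zero, hpw, h0]
    | succ n ih =>
      have h := (hrun (wcat x w')).2 (x.length + n)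
      rw [ih, wcat_add] at h
      exact hdet _ _ _ _ h (hw' n)
  constructor
  · intro hgood
    obtain ⟨σ, h0, hs, hinf⟩ := exists_inf_path hT hST hsucc hpT
    obtain ⟨w', hw'⟩ := real σ h0 hs
    have h : {n | run (wcat x w') n ∈ S}.Finite := hgood w'
    refine hinf ((h.preimage (f := fun n => x.length + n) (fun a _ b _ hab => by
      simpa using hab)).subset ?_)
    intro n hn
    simpa [hw'] using hn
  · intro hbad
    obtain ⟨b, hb⟩ := hrN.bddAbove
    have hrT : ∀ n, r (b + 1 + n) ∈ T \ S := by
      intro n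
      by_contra hc
      have := hb hc
      omega
    obtain ⟨σ, h0, hs, hfin⟩ := exists_fin_path (S := S)
      (minTrap_reach hT hpT (hrT 0).1) (fun n => r (b + 1 + n)) rfl (fun n => hr.2 _) (by
        have : {n | r (b + 1 + n) ∈ S} = ∅ := by
          ext n
          simpa using (hrT n).2
        rw [this]
        exact Set.finite_empty)
    obtain ⟨w', hw'⟩ := real σ h0 hs
    refine hbad w' (((Set.finite_lt_nat x.length).union
      (hfin.image (fun n => x.length + n))).subset ?_)
    intro n hn
    by_cases h : n < x.length
    · left
      exact h
    · right
      refine ⟨n - x.length, ?_, by simp; omega⟩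
      have := hw' (n - x.length)
      rw [Nat.add_sub_cancel' (by omega)] at this
      simpa [← this] using hn
end

section
/- Let A be a deterministic complete automaton, and let T, S be sets of states of A such that T is a minimal trap set, S ∩ T ≠ ∅, and T \ S is nonempty and not a transient of A. Then for every run ρ of A and every index i with ρ_i ∈ T, the finite word read along ρ up to position i is an ugly prefix for the acceptance condition Inf(S). -/
/-- State reached after `n` letters of `x` from `q`, for transition function `d`. -/
def stt {Q A : Type*} (d : Q → A → Q) : Q → (ℕ → A) → ℕ → Q
  | q, _, 0 => q
  | q, x, n + 1 => stt d (d q (x 0)) (fun k => x (k + 1)) n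

theorem stt_succ {Q A : Type*} (d : Q → A → Q) (n : ℕ) : ∀ (q : Q) (x : ℕ → A),
    stt d q x (n + 1) = d (stt d q x n) (x n) := by
  induction n with
  | zero => intro q x; rfl
  | succ n ih =>
    intro q x
    have := ih (d q (x 0)) (fun k => x (k + 1))
    exact this

theorem stt_wcat {Q A : Type*} (d : Q → A → Q) (u : List A) : ∀ (q : Q) (x : ℕ → A) (n : ℕ),
    stt d q (wcat u x) (u.length + n) = stt d (u.foldl d q) x n := by
  induction u with
  | nil =>
    intro q x n
    have : wcat [] x = x := by funext k; simp [wcat]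
    simp [this]
  | cons a u ih =>
    intro q x n
    have h0 : wcat (a :: u) x 0 = a := by simp [wcat]
    have h1 : (fun k => wcat (a :: u) x (k + 1)) = wcat u x := by
      funext k; simp [wcat]
    have h2 : (a :: u).length + n = (u.length + n) + 1 := by simp; omega
    rw [h2]
    change stt d (d q (wcat (a :: u) x 0)) (fun k => wcat (a :: u) x (k + 1)) _ = _
    rw [h0, h1, ih]
    rfl

theorem foldl_ofFn_stt {Q A : Type*} (d : Q → A → Q) (i : ℕ) : ∀ (q : Q) (w : ℕ → A),
    (List.ofFn fun k : Fin i => w k).foldl d q = stt d q w i := by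
  induction i with
  | zero => intro q w; simp [stt]
  | succ i ih =>
    intro q w
    rw [List.ofFn_succ, List.foldl_cons]
    have := ih (d q (w 0)) (fun k => w (k + 1))
    simpa [stt] using this

theorem runOn_eq_stt {Q A : Type*} (δ : Set (Q × A × Q)) (d : Q → A → Q)
    (hd : ∀ q a q', (q, a, q') ∈ δ → q' = d q a) (q₀ : Q) (w : ℕ → A) (ρ : ℕ → Q)
    (h : IsRunOn δ {q₀} w ρ) (n : ℕ) : ρ n = stt d q₀ w n := by
  induction n with
  | zero => exact h.1
  | succ n ih => rw [stt_succ, ← ih]; exact hd _ _ _ (h.2 n)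

theorem foldl_mem_trap {Q A : Type*} (d : Q → A → Q) (T : Set Q)
    (hT : ∀ q ∈ T, ∀ a, d q a ∈ T) (v : List A) : ∀ q ∈ T, v.foldl d q ∈ T := by
  induction v with
  | nil => intro q hq; exact hq
  | cons a v ih => intro q hq; exact ih _ (hT q hq a)

/-- From any state of `T` some word visits `s` infinitely often. -/
theorem exists_word_inf {Q A : Type*} [Nonempty A] (d : Q → A → Q) (T : Set Q)
    (hT : ∀ q ∈ T, ∀ a, d q a ∈ T) (s : Q)
    (hr : ∀ q ∈ T, ∃ l : List A, l.foldl d q = s) (p : Q) (hp : p ∈ T) :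
    ∃ x : ℕ → A, ∀ n, ∃ m, n ≤ m ∧ stt d p x m = s := by
  classical
  let f : Q → ℕ := fun q => sInf {n | ∃ l : List A, l.length = n ∧ l.foldl d q = s}
  have hf : ∀ q, ∃ a, q ∈ T → q ≠ s → f (d q a) < f q := by
    intro q
    by_cases hq : q ∈ T
    · obtain ⟨l0, hl0⟩ := hr q hq
      have hne : {n | ∃ l : List A, l.length = n ∧ l.foldl d q = s}.Nonempty :=
        ⟨_, l0, rfl, hl0⟩
      obtain ⟨l, hl, hls⟩ := Nat.sInf_mem hne
      cases l with
      | nil => exact ⟨Classical.arbitrary A, fun _ h => absurd hls h⟩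
      | cons a l =>
        refine ⟨a, fun _ _ => ?_⟩
        have h1 : f (d q a) ≤ l.length := Nat.sInf_le ⟨l, rfl, hls⟩
        have h2 : (a :: l).length = f q := hl
        simp at h2
        omega
    · exact ⟨Classical.arbitrary A, fun h => absurd h hq⟩
  choose g hg using hf
  let σ : ℕ → Q := fun n => Nat.rec p (fun _ q => d q (g q)) n
  have hσ : ∀ n, σ (n + 1) = d (σ n) (g (σ n)) := fun n => rfl
  have hσT : ∀ n, σ n ∈ T := by
    intro n
    induction n with
    | zero => exact hp
    | succ n ih => rw [hσ]; exact hT _ ih _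
  have hst : ∀ n, stt d p (fun n => g (σ n)) n = σ n := by
    intro n
    induction n with
    | zero => rfl
    | succ n ih => rw [stt_succ, ih, hσ]
  refine ⟨fun n => g (σ n), fun n => ?_⟩
  simp only [hst]
  have key : ∀ k n, f (σ n) ≤ k → ∃ m, n ≤ m ∧ σ m = s := by
    intro k
    induction k with
    | zero =>
      intro n hn
      rcases Classical.em (σ n = s) with h | h
      · exact ⟨n, le_rfl, h⟩
      · have := hg _ (hσT n) h; omega
    | succ k ih =>
      intro n hn
      rcases Classical.em (σ n = s) with h | h
      · exact ⟨n, le_rfl, h⟩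
      · have := hg _ (hσT n) h
        rw [← hσ] at this
        obtain ⟨m, hm, hms⟩ := ih (n + 1) (by omega)
        exact ⟨m, by omega, hms⟩
  exact key _ n le_rfl

/-- In a deterministic complete automaton, if `T` is a minimal
trap set, `S ∩ T ≠ ∅`, and `T \ S` is nonempty and not a transient, then for
every run `ρ` (on word `w`) and index `i` with `ρ i ∈ T`, the finite word
`w₀ ⋯ w_{i-1}` read along `ρ` up to position `i` is an ugly prefix for the
acceptance condition `Inf(S)`. -/
theorem ugly_prefix_for_inf {Q A : Type*} [Fintype Q] [Fintype A]
    (δ : Set (Q × A × Q)) (Q₀ : Set Q)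
    (hdet₀ : ∃ q₀, Q₀ = {q₀})
    (hdet : ∀ q a q₁ q₂, (q, a, q₁) ∈ δ → (q, a, q₂) ∈ δ → q₁ = q₂)
    (hcomp : ∀ q a, ∃ q', (q, a, q') ∈ δ)
    (run : (ℕ → A) → ℕ → Q)
    (hrun : ∀ w, IsRunOn δ Q₀ w (run w))
    (T S : Set Q)
    (hT : IsMinTrap δ T)
    (hST : (S ∩ T).Nonempty)
    (hTSne : (T \ S).Nonempty)
    (hTStr : ¬ IsTransient δ Q₀ (T \ S))
    (ρ : ℕ → Q) (w : ℕ → A) (hρ : IsRunOn δ Q₀ w ρ)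
    (i : ℕ) (hi : ρ i ∈ T) :
    UglyPrefix run (fun r => {n | r n ∈ S}.Infinite) (List.ofFn fun k : Fin i => w k) := by
  classical
  obtain ⟨q₀, rfl⟩ := hdet₀
  haveI : Nonempty A := ⟨w 0⟩
  choose d hd0 using hcomp
  have hd : ∀ q a q', (q, a, q') ∈ δ → q' = d q a := fun q a q' h => hdet q a _ _ h (hd0 q a)
  have hTd : ∀ q ∈ T, ∀ a, d q a ∈ T := fun q hq a => hT.1.2 q hq _ ⟨a, hd0 q a⟩
  have hreach : ∀ p ∈ T, ∀ q ∈ T, ∃ l : List A, l.foldl d p = q := by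
    intro p hp q hq
    by_contra hcon
    refine hT.2 {q | ∃ l : List A, l.foldl d p = q} ?_ ?_
    · refine ⟨?_, fun h => hcon (h hq)⟩
      rintro q' ⟨l, rfl⟩
      exact foldl_mem_trap d T hTd l p hp
    · refine ⟨⟨p, [], rfl⟩, ?_⟩
      rintro q1 ⟨l, rfl⟩ q2 ⟨a, ha⟩
      exact ⟨l ++ [a], by rw [hd _ _ _ ha]; simp⟩
  intro v
  set U := (List.ofFn fun k : Fin i => w k) ++ v with hU
  have hp : U.foldl d q₀ ∈ T := by
    rw [hU, List.foldl_append, foldl_ofFn_stt]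
    apply foldl_mem_trap d T hTd
    rw [← runOn_eq_stt δ d hd q₀ w ρ hρ]
    exact hi
  have hrunU : ∀ x n, run (wcat U x) (U.length + n) = stt d (U.foldl d q₀) x n := by
    intro x n
    rw [runOn_eq_stt δ d hd q₀ _ _ (hrun _), stt_wcat]
  constructor
  · intro hgood
    unfold IsTransient at hTStr
    push Not at hTStr
    obtain ⟨τ, hτ, hfin⟩ := hTStr
    obtain ⟨m, hm⟩ := hfin.bddAbove
    have hm' : ∀ n, τ (m + 1 + n) ∈ T \ S := by
      intro n
      by_contra hc
      have : m + 1 + n ≤ m := hm hc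
      omega
    choose y hy using hτ.2
    obtain ⟨l, hl⟩ := hreach _ hp _ (hm' 0).1
    let z : ℕ → A := fun n => y (m + 1 + n)
    have hz : ∀ n, stt d (τ (m + 1 + 0)) z n = τ (m + 1 + n) := by
      intro n
      induction n with
      | zero => rfl
      | succ n ih => rw [stt_succ, ih]; exact (hd _ _ _ (hy (m + 1 + n))).symm
    obtain ⟨n, hnS, hn⟩ := (hgood (wcat l z)).exists_gt (U.length + l.length)
    obtain ⟨k, rfl⟩ := Nat.exists_eq_add_of_le hn.le
    have hnS' : run (wcat U (wcat l z)) (U.length + l.length + k) ∈ S := hnS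
    rw [add_assoc, hrunU, stt_wcat, hl, hz] at hnS'
    exact (hm' k).2 hnS'
  · intro hbad
    obtain ⟨s, hsS, hsT⟩ := hST
    obtain ⟨x, hx⟩ := exists_word_inf d T hTd s (fun q hq => hreach q hq s hsT) _ hp
    refine hbad x (Set.infinite_of_not_bddAbove ?_)
    rintro ⟨b, hb⟩
    obtain ⟨m, hm, hms⟩ := hx (b + 1)
    have : U.length + m ≤ b := hb (by
      change run (wcat U x) (U.length + m) ∈ S
      rw [hrunU, hms]; exact hsS)
    omega
end
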